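/- arXiv:1812.10789 — 2 statements merged into one kernel-verified Lean document; each statement's English description precedes it below -/
import Mathlib

section
/- Let A and B be finite alphabets, X ⊆ A^ℤ closed and σ^n-invariant and Y ⊆ B^ℤ closed and σ^m-invariant for some n,m ≥ 1, and let h : X → Y be a continuous surjection with h∘σ^n = σ^m∘h. Then the map [x]_A ↦ [h(x)]_B is well defined and Lipschitz continuous from ([X]_A, D_1) to ([Y]_B, D_1). In particular, if h is a homeomorphism conjugating (X,σ^n) and (Y,σ^m), this map is a Lipschitz homeomorphism with Lipschitz inverse. -/
open Filter Topology Set MeasureTheory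
open scoped ENNReal

noncomputable section

/-- The upper density of a set of natural numbers. -/
def upperDensity (E : Set ℕ) : ℝ :=
  Filter.limsup (fun n : ℕ =>
    (∑ k ∈ Finset.range n, E.indicator (fun _ => (1 : ℝ)) k) / n) Filter.atTop

/-- `S` is an `(f,δ,ν)`-separated subset of `X`, with respect to the distance `ρ`. -/
def IsSepSet {α : Type*} (ρ : α → α → ℝ) (f : α → α) (X : Set α) (δ ν : ℝ) (S : Set α) : Prop :=
  S ⊆ X ∧ ∀ x ∈ S, ∀ y ∈ S, x ≠ y → ν ≤ upperDensity {k : ℕ | δ ≤ ρ (f^[k] x) (f^[k] y)}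

/-- The asymptotic separation number `Sep(f,δ,ν)` of `f` on `X`. -/
def sepNum {α : Type*} (ρ : α → α → ℝ) (f : α → α) (X : Set α) (δ ν : ℝ) : ℕ∞ :=
  ⨆ (S : Set α) (_ : IsSepSet ρ f X δ ν S), S.encard

/-- The quantity `log s / (- log ν)`, with value `∞` if `s = ∞`. -/
def logRatio (s : ℕ∞) (ν : ℝ) : ℝ≥0∞ :=
  if s = ⊤ then ⊤ else ENNReal.ofReal (Real.log (s.toNat : ℝ) / (- Real.log ν))

/-- The lower amorphic complexity of `f` on `X`. -/
def acLower {α : Type*} (ρ : α → α → ℝ) (f : α → α) (X : Set α) : ℝ≥0∞ :=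
  ⨆ (δ : ℝ) (_ : 0 < δ),
    Filter.liminf (fun ν : ℝ => logRatio (sepNum ρ f X δ ν) ν) (𝓝[>] (0 : ℝ))

/-- The upper amorphic complexity of `f` on `X`. -/
def acUpper {α : Type*} (ρ : α → α → ℝ) (f : α → α) (X : Set α) : ℝ≥0∞ :=
  ⨆ (δ : ℝ) (_ : 0 < δ),
    Filter.limsup (fun ν : ℝ => logRatio (sepNum ρ f X δ ν) ν) (𝓝[>] (0 : ℝ))

/-- The left shift on `A^ℤ`. -/
def shift {A : Type*} (x : ℤ → A) : ℤ → A := fun n => x (n + 1)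

open scoped Classical in
/-- The Cantor metric `d(x,y) = 2^{-min{|k| : x_k ≠ y_k}}` on `A^ℤ`. -/
def cantorDist {A : Type*} (x y : ℤ → A) : ℝ :=
  if x = y then 0
  else (2 : ℝ) ^ (-((sInf {n : ℕ | ∃ k : ℤ, k.natAbs = n ∧ x k ≠ y k} : ℕ) : ℤ))

/-- The Besicovitch pseudometric `D_1` on `A^ℤ`. -/
def besD1 {A : Type*} (x y : ℤ → A) : ℝ :=
  upperDensity {k : ℕ | x (k : ℤ) ≠ y (k : ℤ)}

/-- The Besicovitch pseudometric `D_B` associated to a map `f` and a distance `ρ`. -/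
def besDB {α : Type*} (ρ : α → α → ℝ) (f : α → α) (x y : α) : ℝ :=
  Filter.limsup (fun n : ℕ => (∑ k ∈ Finset.range n, ρ (f^[k] x) (f^[k] y)) / n) Filter.atTop

/-- The pseudometric `D_δ` on `A^ℤ` associated to a metric `ρ` on `A^ℤ`. -/
def Ddelta {A : Type*} (ρ : (ℤ → A) → (ℤ → A) → ℝ) (δ : ℝ) (x y : ℤ → A) : ℝ :=
  upperDensity {k : ℕ | δ ≤ ρ (shift^[k] x) (shift^[k] y)}

/-- The closure of the two-sided shift orbit of `x₀`. -/
def orbitClosure {A : Type*} [TopologicalSpace A] (x₀ : ℤ → A) : Set (ℤ → A) :=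
  closure {y | ∃ k : ℤ, y = fun n => x₀ (n + k)}

/-- The extension of a constant length substitution `θ : A → A^ℓ` to `A^ℤ`,
via `θ(x)_{ℓk+i} = θ(x_k)_i`. -/
def substApply {A : Type*} {ℓ : ℕ} (hℓ : 0 < ℓ) (θ : A → Fin ℓ → A)
    (x : ℤ → A) : ℤ → A := fun n =>
  θ (x (n / (ℓ : ℤ))) ⟨(n % (ℓ : ℤ)).toNat, by
    have h1 : 0 ≤ n % (ℓ : ℤ) := Int.emod_nonneg n (by exact_mod_cast hℓ.ne')
    have h2 : n % (ℓ : ℤ) < (ℓ : ℤ) := Int.emod_lt_of_pos n (by exact_mod_cast hℓ)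
    omega⟩

/-- A constant length substitution is primitive if some power `θ^m` of it is such that
every letter `b` occurs in every word `θ^m(a)`. -/
def IsPrimitive {A : Type*} {ℓ : ℕ} (hℓ : 0 < ℓ) (θ : A → Fin ℓ → A) : Prop :=
  ∃ m : ℕ, 1 ≤ m ∧ ∀ a b : A, ∃ j : ℤ, 0 ≤ j ∧ j < (ℓ : ℤ) ^ m ∧
    (substApply hℓ θ)^[m] (fun _ => a) j = b

open scoped Classical in
/-- The number of positions at which the words `θ(a)` and `θ(b)` agree. -/
def coincCount {A : Type*} {ℓ : ℕ} (θ : A → Fin ℓ → A) (a b : A) : ℕ :=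
  (Finset.univ.filter (fun j : Fin ℓ => θ a j = θ b j)).card

/-- `c(θ)`, the minimum of `coincCount θ a b` over pairs `a ≠ b`. -/
def cMin {A : Type*} {ℓ : ℕ} (θ : A → Fin ℓ → A) : ℕ :=
  sInf {n : ℕ | ∃ a b : A, a ≠ b ∧ coincCount θ a b = n}

/-- `C(θ)`, the maximum of `coincCount θ a b` over pairs `a ≠ b`. -/
def cMax {A : Type*} {ℓ : ℕ} (θ : A → Fin ℓ → A) : ℕ :=
  sSup {n : ℕ | ∃ a b : A, a ≠ b ∧ coincCount θ a b = n}

/-- `S` is `ε`-separated with respect to the distance `ρ`. -/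
def IsEpsSeparated {α : Type*} (ρ : α → α → ℝ) (ε : ℝ) (S : Set α) : Prop :=
  ∀ x ∈ S, ∀ y ∈ S, x ≠ y → ε ≤ ρ x y

/-- `M_ε(E)`: the maximal cardinality of an `ε`-separated subset of `E`. -/
def packNum {α : Type*} (ρ : α → α → ℝ) (ε : ℝ) (E : Set α) : ℕ∞ :=
  ⨆ (S : Set α) (_ : S ⊆ E ∧ IsEpsSeparated ρ ε S), S.encard

/-- The lower box dimension of `E` with respect to the distance `ρ`. -/
def lowerBoxDim {α : Type*} (ρ : α → α → ℝ) (E : Set α) : ℝ≥0∞ :=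
  Filter.liminf (fun ε : ℝ => logRatio (packNum ρ ε E) ε) (𝓝[>] (0 : ℝ))

/-- The upper box dimension of `E` with respect to the distance `ρ`. -/
def upperBoxDim {α : Type*} (ρ : α → α → ℝ) (E : Set α) : ℝ≥0∞ :=
  Filter.limsup (fun ε : ℝ => logRatio (packNum ρ ε E) ε) (𝓝[>] (0 : ℝ))

/-- Mean equicontinuity of `f` on `X` with respect to the distance `ρ`. -/
def MeanEquicontinuousOn {α : Type*} (ρ : α → α → ℝ) (f : α → α) (X : Set α) : Prop :=
  ∀ ν : ℝ, 0 < ν → ∃ δ : ℝ, 0 < δ ∧ ∀ x ∈ X, ∀ y ∈ X, ρ x y < δ → besDB ρ f x y < ν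

/-- The subshift `X` has discrete spectrum: for every shift-invariant Borel probability
measure giving `X` full measure (there is exactly one for the systems under consideration),
`L²` has a Hilbert basis of eigenfunctions of the shift. -/
def HasDiscreteSpectrum {A : Type*} [MeasurableSpace A] (X : Set (ℤ → A)) : Prop :=
  ∀ μ : Measure (ℤ → A), IsProbabilityMeasure μ → MeasurePreserving shift μ μ → μ X = 1 →
    ∃ (ι : Type) (b : HilbertBasis ι ℂ (Lp ℂ 2 μ)), ∀ i : ι, ∃ c : ℂ,
      (fun z => (b i : Lp ℂ 2 μ) (shift z)) =ᵐ[μ] (fun z => c * (b i : Lp ℂ 2 μ) z)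

end

lemma bes_shift_iter {A : Type*} (x : ℤ → A) (k : ℕ) (i : ℤ) : shift^[k] x i = x (i + k) := by
  induction k generalizing i with
  | zero => simp
  | succ k ih =>
    rw [Function.iterate_succ_apply']
    show shift^[k] x (i + 1) = _
    rw [ih]; congr 1; push_cast; ring

/-- Number of differences in `[0,M)`. -/
noncomputable def besCnt (E : Set ℕ) (M : ℕ) : ℝ :=
  ∑ k ∈ Finset.range M, E.indicator (fun _ => (1 : ℝ)) k

open scoped Classical in
lemma besCnt_eq (E : Set ℕ) (M : ℕ) :
    besCnt E M = (((Finset.range M).filter (fun k => k ∈ E)).card : ℝ) := by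
  simp [besCnt, Set.indicator_apply, Finset.sum_ite]

lemma besCnt_nonneg (E : Set ℕ) (M : ℕ) : 0 ≤ besCnt E M := by
  classical
  rw [besCnt_eq]; positivity

lemma besCnt_le (E : Set ℕ) (M : ℕ) : besCnt E M ≤ M := by
  classical
  rw [besCnt_eq]
  exact_mod_cast (Finset.card_filter_le _ _).trans (by simp)

lemma bes_ratio_le (E : Set ℕ) (M : ℕ) : besCnt E M / M ≤ 1 :=
  div_le_one_of_le₀ (besCnt_le E M) (by positivity)

lemma bes_ratio_nonneg (E : Set ℕ) (M : ℕ) : 0 ≤ besCnt E M / M :=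
  div_nonneg (besCnt_nonneg E M) (by positivity)

lemma bes_bdd (E : Set ℕ) :
    IsBoundedUnder (· ≤ ·) atTop (fun M : ℕ => besCnt E M / M) :=
  isBoundedUnder_of ⟨1, fun M => bes_ratio_le E M⟩

lemma bes_cobdd (E : Set ℕ) :
    IsCoboundedUnder (· ≤ ·) atTop (fun M : ℕ => besCnt E M / M) :=
  IsBoundedUnder.isCoboundedUnder_le (isBoundedUnder_of ⟨0, fun M => bes_ratio_nonneg E M⟩)

lemma bes_ud_nonneg (E : Set ℕ) : 0 ≤ upperDensity E := by
  show 0 ≤ limsup (fun M : ℕ => besCnt E M / M) atTop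
  exact le_limsup_of_frequently_le
    (Frequently.of_forall fun M => bes_ratio_nonneg E M) (bes_bdd E)

lemma bes_ud_le (E F : Set ℕ) (n : ℕ) (hn : 1 ≤ n) (C D : ℝ) (hC : 0 ≤ C)
    (hle : ∀ M : ℕ, besCnt F M ≤ C * (besCnt E (n * M) + D)) :
    upperDensity F ≤ C * n * upperDensity E := by
  have key : ∀ ε > 0, upperDensity F ≤ C * n * (upperDensity E + ε) + ε := by
    intro ε hε
    have h1 : ∀ᶠ k : ℕ in atTop, besCnt E k / k < upperDensity E + ε :=
      eventually_lt_of_limsup_lt (show limsup (fun M : ℕ => besCnt E M / M) atTop < _ from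
        lt_add_of_pos_right _ hε) (bes_bdd E)
    have h2 : Tendsto (fun M : ℕ => n * M) atTop atTop :=
      tendsto_id.const_mul_atTop' (by omega)
    have h3 : Tendsto (fun M : ℕ => C * D / (M : ℝ)) atTop (𝓝 0) :=
      tendsto_const_div_atTop_nhds_zero_nat _
    show limsup (fun M : ℕ => besCnt F M / M) atTop ≤ _
    refine limsup_le_of_le (bes_cobdd F) ?_
    filter_upwards [h2.eventually h1, h3.eventually (gt_mem_nhds hε), eventually_gt_atTop 0]
      with M h4 h5 h6
    have hM : (0 : ℝ) < M := by exact_mod_cast h6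
    have hn' : (0 : ℝ) < n := by exact_mod_cast hn
    have e : C * (besCnt E (n * M) + D) / M
        = C * n * (besCnt E (n * M) / ((n * M : ℕ) : ℝ)) + C * D / M := by
      push_cast; field_simp
    calc besCnt F M / M ≤ C * (besCnt E (n * M) + D) / M := by gcongr; exact hle M
      _ = _ := e
      _ ≤ _ := by gcongr
  have ht : Tendsto (fun ε : ℝ => C * n * (upperDensity E + ε) + ε) (𝓝[>] (0 : ℝ))
      (𝓝 (C * n * (upperDensity E + 0) + 0)) := by
    apply Tendsto.mono_left _ nhdsWithin_le_nhds
    exact Continuous.tendsto (by fun_prop) 0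
  simp only [add_zero] at ht
  exact ge_of_tendsto ht (eventually_mem_nhdsWithin.mono fun ε hε => key ε hε)

lemma bes_count {A B : Type} (n m N : ℕ) (hn : 1 ≤ n) (hm : 1 ≤ m)
    (x x' : ℤ → A) (y y' : ℤ → B)
    (H : ∀ k r : ℕ, r < m → y ((k * m + r : ℕ) : ℤ) ≠ y' ((k * m + r : ℕ) : ℤ) →
      ∃ i : ℤ, -N ≤ i ∧ i ≤ N ∧ x (k * n + i) ≠ x' (k * n + i)) (M : ℕ) :
    besCnt {k : ℕ | y (k : ℤ) ≠ y' (k : ℤ)} M ≤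
      ((2 * N + 1) * m : ℕ) * (besCnt {k : ℕ | x (k : ℤ) ≠ x' (k : ℤ)} (n * M)
        + (2 * N + 1 : ℕ)) := by
  classical
  rw [besCnt_eq, besCnt_eq]
  norm_cast
  set Q := (Finset.range (n * M)).filter (fun k => k ∈ {k : ℕ | x (k : ℤ) ≠ x' (k : ℤ)}) with hQ
  set P : Finset ℤ := Q.image (fun k : ℕ => (k : ℤ)) ∪
    (Finset.Ico (-N : ℤ) 0 ∪ Finset.Icc ((n * M : ℕ) : ℤ) ((n * M : ℕ) + N)) with hP
  have hPc : P.card ≤ Q.card + (2 * N + 1) := by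
    refine (Finset.card_union_le _ _).trans ?_
    refine add_le_add Finset.card_image_le ((Finset.card_union_le _ _).trans ?_)
    simp only [Int.card_Ico, Int.card_Icc]
    omega
  set I : Finset ℤ := Finset.Icc (-N : ℤ) N with hI
  have hIc : I.card = 2 * N + 1 := by
    rw [hI, Int.card_Icc]; omega
  have hsub : (Finset.range M).filter (fun k => k ∈ {k : ℕ | y (k : ℤ) ≠ y' (k : ℤ)}) ⊆
      ((I ×ˢ Finset.range m) ×ˢ P).image
        (fun q => ((q.2 - q.1.1) / (n : ℤ)).toNat * m + q.1.2) := by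
    intro j hj
    simp only [Finset.mem_filter, Finset.mem_range, Set.mem_setOf_eq] at hj
    obtain ⟨hjM, hj⟩ := hj
    have hd : j / m * m + j % m = j := Nat.div_add_mod' j m
    have hr : j % m < m := Nat.mod_lt _ hm
    obtain ⟨i, hi1, hi2, hi3⟩ := H (j / m) (j % m) hr (by rw [hd]; exact hj)
    rw [Finset.mem_image]
    refine ⟨((i, j % m), ((j / m : ℕ) : ℤ) * n + i), ?_, ?_⟩
    · simp only [Finset.mem_product, Finset.mem_range]
      refine ⟨⟨Finset.mem_Icc.2 ⟨hi1, hi2⟩, hr⟩, ?_⟩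
      have hkM : (j / m : ℕ) ≤ M := (Nat.div_le_self _ _).trans hjM.le
      have hle : ((j / m : ℕ) : ℤ) * n ≤ ((n * M : ℕ) : ℤ) := by
        rw [mul_comm n M]; exact_mod_cast Nat.mul_le_mul_right n hkM
      have hge : (0 : ℤ) ≤ ((j / m : ℕ) : ℤ) * n := by positivity
      generalize ((j / m : ℕ) : ℤ) * n = w at *
      rw [hP, Finset.mem_union, Finset.mem_union]
      by_cases h0 : w + i < 0
      · right; left; rw [Finset.mem_Ico]; omega
      by_cases h1 : ((n * M : ℕ) : ℤ) ≤ w + i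
      · right; right; rw [Finset.mem_Icc]; omega
      left
      rw [Finset.mem_image]
      have e : (((w + i).toNat : ℕ) : ℤ) = w + i := Int.toNat_of_nonneg (by omega)
      refine ⟨(w + i).toNat, ?_, e⟩
      rw [hQ, Finset.mem_filter, Finset.mem_range, Set.mem_setOf_eq, e]
      exact ⟨by omega, hi3⟩
    · have hn0 : (n : ℤ) ≠ 0 := by omega
      simp only [add_sub_cancel_right, Int.mul_ediv_cancel _ hn0, Int.toNat_natCast]
      exact hd
  calc _ ≤ _ := Finset.card_le_card hsub
    _ ≤ _ := Finset.card_image_le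
    _ = (2 * N + 1) * m * P.card := by
      rw [Finset.card_product, Finset.card_product, hIc, Finset.card_range]
    _ ≤ _ := Nat.mul_le_mul_left _ hPc

lemma bes_local {A B Z : Type} [TopologicalSpace A] [DiscreteTopology A]
    [TopologicalSpace B] [DiscreteTopology B] [TopologicalSpace Z] [CompactSpace Z]
    (m : ℕ) (u : Z → ℤ → A) (v : Z → ℤ → B) (hu : Continuous u) (hv : Continuous v)
    (huv : ∀ z z', u z = u z' → v z = v z') :
    ∃ N : ℕ, ∀ z z', (∀ i : ℤ, -N ≤ i → i ≤ N → u z i = u z' i) →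
      ∀ r : ℕ, r < m → v z r = v z' r := by
  have hu' : ∀ i, Continuous fun z => u z i := fun i => (continuous_apply i).comp hu
  have hv' : ∀ i, Continuous fun z => v z i := fun i => (continuous_apply i).comp hv
  have hcu : ∀ i, IsClopen {p : Z × Z | u p.1 i = u p.2 i} := fun i =>
    (isClopen_discrete {q : A × A | q.1 = q.2}).preimage
      (((hu' i).comp continuous_fst).prodMk ((hu' i).comp continuous_snd))
  have hcv : ∀ i, IsClopen {p : Z × Z | v p.1 i = v p.2 i} := fun i =>
    (isClopen_discrete {q : B × B | q.1 = q.2}).preimage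
      (((hv' i).comp continuous_fst).prodMk ((hv' i).comp continuous_snd))
  let F : ℕ → Set (Z × Z) := fun N =>
    {p | ∀ i : ℤ, -N ≤ i → i ≤ N → u p.1 i = u p.2 i}
  let K : Set (Z × Z) := {p | ∀ r : ℕ, r < m → v p.1 r = v p.2 r}ᶜ
  have hK : IsClosed K := by
    rw [isClosed_compl_iff]
    have : {p : Z × Z | ∀ r : ℕ, r < m → v p.1 r = v p.2 r}
        = ⋂ r ∈ Finset.range m, {p : Z × Z | v p.1 r = v p.2 r} := by ext; simp
    rw [this]
    exact isOpen_biInter_finset fun r _ => (hcv r).isOpen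
  have hF : ∀ N, IsClosed (F N) := by
    intro N
    have : F N = ⋂ i : ℤ, ⋂ (_ : -(N : ℤ) ≤ i), ⋂ (_ : i ≤ N),
        {p : Z × Z | u p.1 i = u p.2 i} := by ext; simp [F]
    rw [this]
    exact isClosed_iInter fun i => isClosed_iInter fun _ => isClosed_iInter fun _ =>
      (hcu i).isClosed
  have hemp : K ∩ ⋂ N, F N = ∅ := by
    rw [Set.eq_empty_iff_forall_notMem]
    rintro ⟨z, z'⟩ ⟨h1, h2⟩
    apply h1
    intro r _
    have : u z = u z' := by
      funext i
      exact (Set.mem_iInter.1 h2 i.natAbs) i (by omega) (by omega)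
    exact congrFun (huv z z' this) r
  have hdir : Directed (· ⊇ ·) F := by
    refine directed_of_isDirected_le ?_
    intro a b hab p hp i h1 h2
    exact hp i (by omega) (by omega)
  obtain ⟨N, hN⟩ := hK.isCompact.elim_directed_family_closed F hF hemp hdir
  refine ⟨N, fun z z' hz => ?_⟩
  by_contra hc
  exact Set.eq_empty_iff_forall_notMem.1 hN (z, z') ⟨hc, hz⟩

lemma bes_main {A B Z : Type} [TopologicalSpace A] [DiscreteTopology A]
    [TopologicalSpace B] [DiscreteTopology B] [TopologicalSpace Z] [CompactSpace Z]
    (n m : ℕ) (hn : 1 ≤ n) (hm : 1 ≤ m)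
    (u : Z → ℤ → A) (v : Z → ℤ → B) (hu : Continuous u) (hv : Continuous v)
    (huv : ∀ z z', u z = u z' → v z = v z') (T : Z → Z)
    (hTu : ∀ z, u (T z) = shift^[n] (u z)) (hTv : ∀ z, v (T z) = shift^[m] (v z)) :
    ∃ L : ℝ, 0 ≤ L ∧ ∀ z z', besD1 (v z) (v z') ≤ L * besD1 (u z) (u z') := by
  obtain ⟨N, hN⟩ := bes_local m u v hu hv huv
  have hTu' : ∀ (k : ℕ) z i, u (T^[k] z) i = u z (k * n + i) := by
    intro k
    induction k with
    | zero => simp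
    | succ k ih =>
      intro z i
      rw [Function.iterate_succ_apply', hTu, bes_shift_iter, ih]
      congr 1; push_cast; ring
  have hTv' : ∀ (k : ℕ) z i, v (T^[k] z) i = v z (k * m + i) := by
    intro k
    induction k with
    | zero => simp
    | succ k ih =>
      intro z i
      rw [Function.iterate_succ_apply', hTv, bes_shift_iter, ih]
      congr 1; push_cast; ring
  refine ⟨((2 * N + 1) * m : ℕ) * n, by positivity, fun z z' => ?_⟩
  refine bes_ud_le _ _ n hn _ ((2 * N + 1 : ℕ) : ℝ) (by positivity) ?_
  refine bes_count n m N hn hm _ _ _ _ ?_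
  intro k r hr hne
  by_contra! hc
  apply hne
  have := hN (T^[k] z) (T^[k] z') (fun i h1 h2 => by
    rw [hTu', hTu']; exact hc i h1 h2) r hr
  rw [hTv', hTv'] at this
  push_cast
  exact this


/-- A factor map `h` between a `σ^n`-invariant set `X ⊆ A^ℤ` and a
`σ^m`-invariant set `Y ⊆ B^ℤ` induces a well-defined Lipschitz continuous map
`[x]_A ↦ [h(x)]_B` between the corresponding subsets of the Besicovitch spaces;
if `h` is moreover injective (a conjugacy), the induced map is a Lipschitz homeomorphism
with Lipschitz inverse. -/
theorem factor_map_besicovitch_lipschitz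
    {A B : Type} [Fintype A] [TopologicalSpace A] [DiscreteTopology A]
    [Fintype B] [TopologicalSpace B] [DiscreteTopology B]
    (n m : ℕ) (hn : 1 ≤ n) (hm : 1 ≤ m)
    (X : Set (ℤ → A)) (hXcl : IsClosed X) (hXinv : shift^[n] '' X = X)
    (Y : Set (ℤ → B)) (hYcl : IsClosed Y) (hYinv : shift^[m] '' Y = Y)
    (h : (ℤ → A) → (ℤ → B)) (hcont : ContinuousOn h X) (hsurj : h '' X = Y)
    (hequiv : ∀ x ∈ X, h (shift^[n] x) = shift^[m] (h x)) :
    ((∀ x ∈ X, ∀ x' ∈ X, besD1 x x' = 0 → besD1 (h x) (h x') = 0) ∧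
      (∃ L : ℝ, 0 ≤ L ∧ ∀ x ∈ X, ∀ x' ∈ X, besD1 (h x) (h x') ≤ L * besD1 x x')) ∧
    (Set.InjOn h X →
      ∃ L' : ℝ, 0 ≤ L' ∧ ∀ x ∈ X, ∀ x' ∈ X, besD1 x x' ≤ L' * besD1 (h x) (h x')) := by
  have : CompactSpace X := isCompact_iff_compactSpace.1 hXcl.isCompact
  let T : X → X := fun z => ⟨shift^[n] z.1, hXinv.subset (Set.mem_image_of_mem _ z.2)⟩
  have hc : Continuous fun z : X => h z.1 := continuousOn_iff_continuous_restrict.1 hcont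
  obtain ⟨L, hL0, hL⟩ := bes_main n m hn hm (fun z : X => z.1) (fun z : X => h z.1)
    continuous_subtype_val hc (fun z z' e => congrArg h e) T (fun _ => rfl)
    (fun z => hequiv z.1 z.2)
  refine ⟨⟨fun x hx x' hx' h0 => ?_, L, hL0, fun x hx x' hx' => hL ⟨x, hx⟩ ⟨x', hx'⟩⟩, ?_⟩
  · have := hL ⟨x, hx⟩ ⟨x', hx'⟩
    simp only [h0, mul_zero] at this
    exact le_antisymm this (bes_ud_nonneg _)
  · intro hinj
    obtain ⟨L', hL0', hL'⟩ := bes_main m n hm hn (fun z : X => h z.1) (fun z : X => z.1)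
      hc continuous_subtype_val (fun z z' e => hinj z.2 z'.2 e) T
      (fun z => hequiv z.1 z.2) (fun _ => rfl)
    exact ⟨L', hL0', fun x hx x' hx' => hL' ⟨x, hx⟩ ⟨x', hx'⟩⟩
end

section
/- Let (X,σ) be a subshift of Σ = A^ℤ and let X_0,…,X_{m−1} ⊆ X be a cyclic σ^n-minimal partition of X for some m,n ≥ 1: the X_i are pairwise disjoint, closed, σ^n-minimal, their union is X, σ(X_{i−1}) = X_i for 1 ≤ i < m and σ(X_{m−1}) = X_0. Then in the Besicovitch space, [X] = ⋃_{i=0}^{m−1} [X_i] = ⋃_{i=0}^{m−1} σ^i([X_0]), and the sets [X_0],…,[X_{m−1}] are pairwise disjoint. -/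
open Filter Topology Set MeasureTheory
open scoped ENNReal

theorem shift_iterate_apply' {A : Type*} (k : ℕ) (x : ℤ → A) (t : ℤ) :
    shift^[k] x t = x (t + k) := by
  induction k generalizing t with
  | zero => simp
  | succ k ih =>
    rw [Function.iterate_succ_apply']
    show shift^[k] x (t + 1) = _
    rw [ih]; congr 1; push_cast; ring

theorem exists_window {A : Type*} [TopologicalSpace A] [DiscreteTopology A]
    (C : Set ((ℤ → A) × (ℤ → A))) (hC : IsCompact C) (hd : ∀ p ∈ C, p.1 ≠ p.2) :
    ∃ N : ℕ, ∀ p ∈ C, ∃ t : ℤ, |t| ≤ N ∧ p.1 t ≠ p.2 t := by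
  obtain ⟨N, hN⟩ := hC.elim_directed_family_closed
    (fun N : ℕ => {p : (ℤ → A) × (ℤ → A) | ∀ t : ℤ, |t| ≤ N → p.1 t = p.2 t})
    (by
      intro N
      simp only [setOf_forall]
      refine isClosed_iInter fun t => isClosed_iInter fun _ => ?_
      exact isClosed_eq (by fun_prop) (by fun_prop))
    (by
      ext p
      simp only [mem_inter_iff, mem_iInter, mem_setOf_eq, mem_empty_iff_false, iff_false, not_and]
      intro hp h
      apply hd p hp
      funext t
      exact h t.natAbs t (by simp))
    (by
      intro a b
      refine ⟨max a b, ?_, ?_⟩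
      · intro p hp t ht
        exact hp t (ht.trans (by simp))
      · intro p hp t ht
        exact hp t (ht.trans (by simp)))
  refine ⟨N, fun p hp => ?_⟩
  by_contra! h
  have : p ∈ (∅ : Set ((ℤ → A) × (ℤ → A))) := by
    rw [← hN]; exact ⟨hp, h⟩
  exact this

theorem upperDensity_pos_of_syndetic (E : Set ℕ) (L : ℕ) (hL : 0 < L)
    (h : ∀ k : ℕ, ∃ t < L, k + t ∈ E) : 0 < upperDensity E := by
  have hind : ∀ k, 0 ≤ E.indicator (fun _ => (1 : ℝ)) k := fun k =>
    indicator_nonneg (fun _ _ => zero_le_one) k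
  have hcount : ∀ q : ℕ, (q : ℝ) ≤ ∑ k ∈ Finset.range (q * L), E.indicator (fun _ => (1 : ℝ)) k := by
    intro q
    induction q with
    | zero => simp
    | succ q ih =>
      rw [add_mul, one_mul, Finset.sum_range_add]
      obtain ⟨t, ht, hE⟩ := h (q * L)
      have := Finset.single_le_sum (s := Finset.range L)
        (f := fun x => E.indicator (fun _ => (1 : ℝ)) (q * L + x)) (fun i _ => hind _)
        (Finset.mem_range.2 ht)
      simp only [indicator_of_mem hE] at this
      push_cast
      linarith
  have hLr : (0 : ℝ) < L := by exact_mod_cast hL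
  have hle : (1 : ℝ) / L ≤ upperDensity E := by
    unfold upperDensity
    apply le_limsup_of_frequently_le
    · rw [frequently_atTop]
      intro a
      refine ⟨(a + 1) * L, by nlinarith, ?_⟩
      have := hcount (a + 1)
      have hp : (0 : ℝ) < (((a + 1) * L : ℕ) : ℝ) := by positivity
      rw [div_le_div_iff₀ hLr hp]
      push_cast at this ⊢
      nlinarith
    · refine ⟨1, ?_⟩
      rw [eventually_map]
      refine Eventually.of_forall fun n => ?_
      apply div_le_one_of_le₀ _ (Nat.cast_nonneg n)
      calc _ ≤ ∑ k ∈ Finset.range n, (1 : ℝ) := Finset.sum_le_sum fun k _ =>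
            indicator_le_self' (fun _ _ => zero_le_one) k
        _ = n := by simp
  exact lt_of_lt_of_le (by positivity) hle

/-- For a cyclic `σ^n`-minimal partition `X_0,…,X_{m-1}` of a subshift
`X`, the images `[X_0],…,[X_{m-1}]` in the Besicovitch space are pairwise disjoint and
`[X] = ⋃_{i<m} [X_i] = ⋃_{i<m} σ^i([X_0])`. -/
theorem besicovitch_cyclic_minimal_partition
    {A : Type} [Fintype A] [TopologicalSpace A] [DiscreteTopology A]
    (X : Set (ℤ → A)) (hne : X.Nonempty) (hcl : IsClosed X) (hinv : shift '' X = X)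
    (m n : ℕ) (hm : 1 ≤ m) (hn : 1 ≤ n) (Xs : ℕ → Set (ℤ → A))
    (hsub : ∀ i < m, Xs i ⊆ X)
    (hdisj : ∀ i < m, ∀ j < m, i ≠ j → Disjoint (Xs i) (Xs j))
    (hclosed : ∀ i < m, IsClosed (Xs i))
    (hmininv : ∀ i < m, (Xs i).Nonempty ∧ shift^[n] '' Xs i = Xs i)
    (hmin : ∀ i < m, ∀ E ⊆ Xs i, E.Nonempty → IsClosed E → shift^[n] '' E = E → E = Xs i)
    (hcover : (⋃ i ∈ Finset.range m, Xs i) = X)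
    (hcyc : ∀ i : ℕ, i + 1 < m → shift '' Xs i = Xs (i + 1))
    (hcyc0 : shift '' Xs (m - 1) = Xs 0) :
    (∀ i < m, ∀ j < m, i ≠ j → ∀ x ∈ Xs i, ∀ y ∈ Xs j, besD1 x y ≠ 0) ∧
    (∀ i < m, Xs i = shift^[i] '' Xs 0) := by
  have hstep : ∀ i < m, ∀ x ∈ Xs i, ∀ k : ℕ, shift^[k] x ∈ Xs ((i + k) % m) := by
    intro i hi x hx k
    induction k with
    | zero => simpa [Nat.mod_eq_of_lt hi] using hx
    | succ k ih =>
      rw [Function.iterate_succ_apply']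
      have hlt : (i + k) % m < m := Nat.mod_lt _ hm
      have hmod : (i + (k + 1)) % m = ((i + k) % m + 1) % m := by
        rw [← add_assoc]; simp [Nat.add_mod]
      rw [hmod]
      by_cases h : (i + k) % m + 1 < m
      · rw [Nat.mod_eq_of_lt h, ← hcyc _ h]
        exact mem_image_of_mem _ ih
      · have h2 : (i + k) % m = m - 1 := by omega
        have h3 : (i + k) % m + 1 = m := by omega
        rw [h3, Nat.mod_self, ← hcyc0]
        rw [h2] at ih
        exact mem_image_of_mem _ ih
  refine ⟨?_, ?_⟩
  · intro i hi j hj hij x hx y hy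
    obtain ⟨N, hN⟩ := exists_window
      (⋃ a ∈ Finset.range m, ⋃ b ∈ (Finset.range m).filter (fun b => a ≠ b), Xs a ×ˢ Xs b)
      (by
        refine Finset.isCompact_biUnion _ fun a ha => Finset.isCompact_biUnion _ fun b hb => ?_
        simp only [Finset.mem_filter, Finset.mem_range] at ha hb
        exact (hclosed a ha).isCompact.prod (hclosed b hb.1).isCompact)
      (by
        rintro ⟨u, v⟩ hp
        simp only [mem_iUnion, Finset.mem_filter, Finset.mem_range, mem_prod] at hp
        obtain ⟨a, ha, b, ⟨hb, hab⟩, hu, hv⟩ := hp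
        intro (huv : u = v)
        subst huv
        exact disjoint_left.1 (hdisj a ha b hb hab) hu hv)
    apply ne_of_gt
    apply upperDensity_pos_of_syndetic _ (2 * N + 1) (by omega)
    intro k
    obtain ⟨t, ht, hne'⟩ := hN (shift^[k + N] x, shift^[k + N] y) (by
      simp only [mem_iUnion, Finset.mem_filter, Finset.mem_range, mem_prod]
      refine ⟨_, Nat.mod_lt _ hm, _, ⟨Nat.mod_lt _ hm, ?_⟩, hstep i hi x hx _, hstep j hj y hy _⟩
      intro h
      have h' : i ≡ j [MOD m] := Nat.ModEq.add_right_cancel' _ h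
      exact hij (h'.eq_of_lt_of_lt hi hj))
    simp only [shift_iterate_apply'] at hne'
    rw [abs_le] at ht
    refine ⟨(t + N).toNat, by omega, ?_⟩
    have : ((k + (t + N).toNat : ℕ) : ℤ) = t + (k + N : ℕ) := by omega
    simp only [mem_setOf_eq, this]
    exact hne'
  · intro i
    induction i with
    | zero => intro _; simp
    | succ i ih =>
      intro hi
      rw [← hcyc i hi, ih (by omega), ← image_comp, ← Function.iterate_succ']
end
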